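/- Let A be a packing bound function and let C be a compact subset of ℝ^n. Then the limit as r → ∞ of A(rC)/r^n exists and equals δ_{A,n} · L_n(C), where L_n is Lebesgue measure on ℝ^n. -/

import Mathlib

open scoped Pointwise
open MeasureTheory Bornology Filter

/-- The unit cube `[0,1]^n` in `ℝ^n`. -/
def unitCube (n : ℕ) : Set (EuclideanSpace ℝ (Fin n)) :=
  {x | ∀ i, x i ∈ Set.Icc (0 : ℝ) 1}

/-- A packing bound function: an assignment of a nonnegative real number to every bounded
Borel subset of every Euclidean space, satisfying the sphere bound, Lipschitz, union,
and mesh axioms. -/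
structure PackingBoundFunction where
  toFun : ∀ d : ℕ, Set (EuclideanSpace ℝ (Fin d)) → ℝ
  nonneg : ∀ (d : ℕ) (C : Set (EuclideanSpace ℝ (Fin d))),
    IsBounded C → MeasurableSet C → 0 ≤ toFun d C
  sphere_bound : ∀ (d : ℕ) (C : Set (EuclideanSpace ℝ (Fin d))),
    IsBounded C → MeasurableSet C → C.Nonempty →
    (∃ z, C ⊆ Metric.ball z 1) → toFun d C = 1
  lipschitz : ∀ (d d' : ℕ) (C : Set (EuclideanSpace ℝ (Fin d)))
    (C' : Set (EuclideanSpace ℝ (Fin d'))),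
    IsBounded C → MeasurableSet C → IsBounded C' → MeasurableSet C' →
    (∃ ψ : EuclideanSpace ℝ (Fin d) → EuclideanSpace ℝ (Fin d'),
      (∀ x ∈ C, ψ x ∈ C') ∧ ∀ x ∈ C, ∀ y ∈ C, dist x y ≤ dist (ψ x) (ψ y)) →
    toFun d C ≤ toFun d' C'
  union : ∀ (d : ℕ) (C C' : Set (EuclideanSpace ℝ (Fin d))),
    IsBounded C → MeasurableSet C → IsBounded C' → MeasurableSet C' →
    (∀ x ∈ C, ∀ x' ∈ C', 2 ≤ dist x x') →
    toFun d (C ∪ C') = toFun d C + toFun d C'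
  mesh : ∀ (ε : ℝ), 0 < ε → ∀ (d : ℕ) (C C' : Set (EuclideanSpace ℝ (Fin d))),
    IsBounded C → MeasurableSet C → IsBounded C' → MeasurableSet C' →
    C ⊆ Metric.thickening ε C' →
    toFun d ((1 / (1 + ε)) • C) ≤ toFun d C'

/-- The Euclidean limit `δ_{A,n}` of a packing bound function: the limit of
`A(2^k·[0,1]^n)/2^{kn}` as `k → ∞` (expressed as a `limsup`, which coincides with the
limit since the latter exists). -/
noncomputable def pbfDensity (A : PackingBoundFunction) (n : ℕ) : ℝ :=
  Filter.limsup (fun k : ℕ => A.toFun n ((2 : ℝ) ^ k • unitCube n) / 2 ^ (k * n)) Filter.atTop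


namespace PackingBoundFunction

lemma mono (A : PackingBoundFunction) {n : ℕ} {C C' : Set (EuclideanSpace ℝ (Fin n))}
    (h : C ⊆ C') (hC : MeasurableSet C) (hb' : IsBounded C') (hC' : MeasurableSet C') :
    A.toFun n C ≤ A.toFun n C' :=
  A.lipschitz n n C C' (hb'.subset h) hC hb' hC' ⟨id, fun _ hx => h hx, fun _ _ _ _ => le_rfl⟩

lemma empty (A : PackingBoundFunction) (n : ℕ) : A.toFun n ∅ = 0 := by
  have := A.union n ∅ ∅ isBounded_empty MeasurableSet.empty isBounded_empty MeasurableSet.empty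
    (by simp)
  simp at this
  exact this

lemma subadd (A : PackingBoundFunction) {n : ℕ} {C C' : Set (EuclideanSpace ℝ (Fin n))}
    (hb : IsBounded C) (hC : MeasurableSet C) (hb' : IsBounded C') (hC' : MeasurableSet C') :
    A.toFun n (C ∪ C') ≤ A.toFun n C + A.toFun n C' := by
  classical
  rcases subsingleton_or_nontrivial (EuclideanSpace ℝ (Fin n)) with hs | hs
  · rcases C.eq_empty_or_nonempty with rfl | ⟨x, hx⟩
    · simp [A.empty]
    · have : C ∪ C' = C := by
        apply Set.union_eq_left.2
        intro y _
        rwa [Subsingleton.elim y x]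
      rw [this]
      have := A.nonneg n C' hb' hC'
      linarith
  obtain ⟨D, hD⟩ := Metric.isBounded_iff.1 (hb.union hb')
  obtain ⟨v, hv⟩ := exists_norm_eq (EuclideanSpace ℝ (Fin n)) (c := 2 * |D| + 2) (by positivity)
  have hDa := le_abs_self D
  have hDp := abs_nonneg D
  have key : ∀ x ∈ C ∪ C', ∀ y ∈ C ∪ C', |D| + 2 ≤ dist x (y + v) := by
    intro x hx y hy
    have h1 : dist x y ≤ D := hD hx hy
    have h2 : dist y (y + v) ≤ dist y x + dist x (y + v) := dist_triangle _ _ _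
    rw [dist_self_add_right, hv, dist_comm y x] at h2
    linarith
  have hm : MeasurableSet ((fun y => y + v) '' C') := by
    exact (measurableEmbedding_addRight v).measurableSet_image.2 hC'
  have hbm : IsBounded ((fun y => y + v) '' C') := by
    exact (LipschitzWith.id.add (LipschitzWith.const v)).isBounded_image hb'
  have h1 : A.toFun n ((fun y => y + v) '' C') ≤ A.toFun n C' := by
    refine A.lipschitz n n _ _ hbm hm hb' hC' ⟨fun y => y - v, ?_, ?_⟩
    · rintro _ ⟨y, hy, rfl⟩
      simpa using hy
    · intro x _ y _
      simp
  have h2 := A.union n C _ hb hC hbm hm (by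
    rintro x hx _ ⟨y, hy, rfl⟩
    have := key x (Or.inl hx) y (Or.inr hy)
    simp only
    linarith)
  have h3 : A.toFun n (C ∪ C') ≤ A.toFun n (C ∪ (fun y => y + v) '' C') := by
    refine A.lipschitz n n _ _ (hb.union hb') (hC.union hC') (hb.union hbm) (hC.union hm)
      ⟨fun x => if x ∈ C then x else x + v, ?_, ?_⟩
    · intro x hx
      by_cases h : x ∈ C
      · simp [h]
      · have : x ∈ C' := hx.resolve_left h
        simp only [h, if_false]
        exact Or.inr ⟨x, this, rfl⟩
    · intro x hx y hy
      have hxy : dist x y ≤ D := hD hx hy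
      by_cases h : x ∈ C <;> by_cases h' : y ∈ C <;> simp only [h, h', if_true, if_false]
      · exact le_rfl
      · have := key x hx y hy
        linarith
      · have := key y hy x hx
        rw [dist_comm (x + v)]
        linarith
      · simp
  linarith

lemma subadd_finset (A : PackingBoundFunction) {n : ℕ} {ι : Type*} (T : Finset ι)
    (f : ι → Set (EuclideanSpace ℝ (Fin n))) (hb : ∀ i ∈ T, IsBounded (f i))
    (hm : ∀ i ∈ T, MeasurableSet (f i)) :
    A.toFun n (⋃ i ∈ T, f i) ≤ ∑ i ∈ T, A.toFun n (f i) := by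
  classical
  induction T using Finset.induction_on with
  | empty => simp [A.empty]
  | insert a T ha ih =>
    rw [Finset.set_biUnion_insert, Finset.sum_insert ha]
    have hb' : ∀ i ∈ T, IsBounded (f i) := fun i hi => hb i (Finset.mem_insert_of_mem hi)
    have hm' : ∀ i ∈ T, MeasurableSet (f i) := fun i hi => hm i (Finset.mem_insert_of_mem hi)
    have h1 := ih hb' hm'
    have h2 := A.subadd (hb a (Finset.mem_insert_self _ _)) (hm a (Finset.mem_insert_self _ _))
      (C' := ⋃ i ∈ T, f i) ((isBounded_biUnion_finset T).2 hb') (Finset.measurableSet_biUnion T hm')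
    linarith

end PackingBoundFunction

lemma mem_smul_unitCube {n : ℕ} {h : ℝ} (hh : 0 < h) (x : EuclideanSpace ℝ (Fin n)) :
    x ∈ h • unitCube n ↔ ∀ i, 0 ≤ x i ∧ x i ≤ h := by
  rw [Set.mem_smul_set_iff_inv_smul_mem₀ hh.ne']
  simp only [unitCube, Set.mem_ofPred_eq, PiLp.smul_apply, smul_eq_mul, Set.mem_Icc]
  refine forall_congr' fun i => ?_
  rw [inv_mul_le_iff₀ hh, mul_one, mul_nonneg_iff_of_pos_left (inv_pos.2 hh)]

lemma isCompact_unitCube (n : ℕ) : IsCompact (unitCube n) := by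
  have h1 : IsCompact (Set.pi Set.univ (fun _ : Fin n => Set.Icc (0 : ℝ) 1)) :=
    isCompact_univ_pi fun _ => isCompact_Icc
  have := h1.image (PiLp.continuous_toLp 2 (fun _ : Fin n => ℝ))
  convert this using 1
  ext x
  constructor
  · intro hx
    exact ⟨x.ofLp, fun i _ => hx i, rfl⟩
  · rintro ⟨y, hy, rfl⟩ i
    exact hy i trivial

lemma volume_pi_set {n : ℕ} (s : Fin n → Set ℝ) (hs : ∀ i, MeasurableSet (s i)) :
    volume {x : EuclideanSpace ℝ (Fin n) | ∀ i, x i ∈ s i} = ∏ i, volume (s i) := by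
  rw [← volume_pi_pi s]
  have h := (PiLp.volume_preserving_ofLp (Fin n)).measure_preimage
    (MeasurableSet.univ_pi hs).nullMeasurableSet
  rw [← h]
  congr 1
  ext x
  simp

lemma volume_unitCube (n : ℕ) : volume (unitCube n) = 1 := by
  have := volume_pi_set (n := n) (fun _ => Set.Icc (0:ℝ) 1) (fun _ => measurableSet_Icc)
  simpa [unitCube] using this

/-- the half-open grid cell -/
def gridCell {n : ℕ} (h : ℝ) (z : Fin n → ℤ) : Set (EuclideanSpace ℝ (Fin n)) :=
  {x | ∀ i, x i ∈ Set.Ico (h * z i) (h * (z i + 1))}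

lemma mem_gridCell_iff {n : ℕ} {h : ℝ} (hh : 0 < h) (z : Fin n → ℤ)
    (x : EuclideanSpace ℝ (Fin n)) : x ∈ gridCell h z ↔ (fun i => ⌊x i / h⌋) = z := by
  rw [funext_iff]
  refine forall_congr' fun i => ?_
  rw [Int.floor_eq_iff, Set.mem_Ico, le_div_iff₀ hh, div_lt_iff₀ hh, mul_comm h, mul_comm h]

lemma measurableSet_gridCell {n : ℕ} (h : ℝ) (z : Fin n → ℤ) : MeasurableSet (gridCell h z) := by
  have : gridCell h z = ⋂ i, {x : EuclideanSpace ℝ (Fin n) | x i ∈ Set.Ico (h * z i) (h * (z i + 1))} := by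
    ext x; simp [gridCell]
  rw [this]
  refine MeasurableSet.iInter fun i => ?_
  exact measurableSet_Ico.preimage (EuclideanSpace.proj (𝕜 := ℝ) i).continuous.measurable

lemma volume_gridCell {n : ℕ} {h : ℝ} (hh : 0 < h) (z : Fin n → ℤ) :
    volume (gridCell h z) = ENNReal.ofReal (h ^ n) := by
  have := volume_pi_set (n := n) (fun i => Set.Ico (h * z i) (h * (z i + 1)))
    (fun _ => measurableSet_Ico)
  rw [gridCell, this]
  simp only [Real.volume_Ico]
  rw [← ENNReal.ofReal_prod_of_nonneg]
  · congr 1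
    have : ∀ i : Fin n, h * ((z i : ℝ) + 1) - h * z i = h := fun i => by ring
    simp [this]
  · intro i _
    nlinarith

lemma dist_gridCell {n : ℕ} {h : ℝ} (hh : 0 < h) (z : Fin n → ℤ)
    {x y : EuclideanSpace ℝ (Fin n)} (hx : x ∈ gridCell h z) (hy : y ∈ gridCell h z) :
    dist x y < (n + 1) * h := by
  have h1 : dist x y ≤ n * h := by
    rw [EuclideanSpace.dist_eq]
    apply Real.sqrt_le_iff.2 ⟨by positivity, ?_⟩
    have : ∀ i ∈ Finset.univ, dist (x i) (y i) ^ 2 ≤ h ^ 2 := by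
      intro i _
      rw [Real.dist_eq]
      have hxi := hx i
      have hyi := hy i
      rw [Set.mem_Ico] at hxi hyi
      have : |x i - y i| ≤ h := by
        rw [abs_le]; constructor <;> linarith
      exact pow_le_pow_left₀ (abs_nonneg _) this 2
    refine (Finset.sum_le_sum this).trans ?_
    simp only [Finset.sum_const, Finset.card_univ, Fintype.card_fin, nsmul_eq_mul]
    rw [mul_pow]
    have : (n : ℝ) ≤ (n : ℝ) ^ 2 := by
      have : n ≤ n ^ 2 := Nat.le_self_pow (by norm_num) n
      exact_mod_cast this
    gcongr
  linarith

lemma packing_master (A : PackingBoundFunction) {n : ℕ} {h : ℝ} (hh : 0 < h)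
    {S : Set (EuclideanSpace ℝ (Fin n))} (hb : IsBounded S) (hm : MeasurableSet S) :
    A.toFun n S ≤ A.toFun n (h • unitCube n) / h ^ n *
      (volume (Metric.thickening ((n + 1) * h) S)).toReal := by
  classical
  set f : EuclideanSpace ℝ (Fin n) → (Fin n → ℤ) := fun x i => ⌊x i / h⌋ with hf
  have hfin : (f '' S).Finite := by
    obtain ⟨R, hR⟩ := hb.exists_norm_le
    refine (Set.finite_Icc (fun _ : Fin n => ⌊-R / h⌋) (fun _ => ⌊R / h⌋)).subset ?_
    rintro _ ⟨x, hx, rfl⟩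
    have : ∀ i, |x i| ≤ R := fun i => (PiLp.norm_apply_le x i).trans (hR x hx)
    refine ⟨fun i => ?_, fun i => ?_⟩
    · exact Int.floor_le_floor (by gcongr; exact (abs_le.1 (this i)).1)
    · exact Int.floor_le_floor (by gcongr; exact (abs_le.1 (this i)).2)
  set T := hfin.toFinset with hT
  have hmemT : ∀ z, z ∈ T ↔ ∃ x ∈ S, f x = z := fun z => by simp [hT]
  have hS : S = ⋃ z ∈ T, S ∩ gridCell h z := by
    ext x
    simp only [Set.mem_iUnion, Set.mem_inter_iff, exists_prop]
    constructor
    · intro hx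
      exact ⟨f x, (hmemT _).2 ⟨x, hx, rfl⟩, hx, (mem_gridCell_iff hh _ _).2 rfl⟩
    · rintro ⟨_, _, hx, _⟩
      exact hx
  have hcell : ∀ z, A.toFun n (S ∩ gridCell h z) ≤ A.toFun n (h • unitCube n) := by
    intro z
    have hcomp : IsCompact (h • unitCube n) := (isCompact_unitCube n).smul h
    refine A.lipschitz n n _ _ (hb.subset Set.inter_subset_left)
      (hm.inter (measurableSet_gridCell h z)) hcomp.isBounded hcomp.measurableSet
      ⟨fun x => x - WithLp.toLp 2 (fun i => h * (z i : ℝ)), ?_, ?_⟩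
    · rintro x ⟨_, hx⟩
      rw [mem_smul_unitCube hh]
      intro i
      have := hx i
      rw [Set.mem_Ico] at this
      simp only [PiLp.sub_apply]
      constructor <;> linarith
    · intro x _ y _
      simp
  have h1 : A.toFun n S ≤ T.card * A.toFun n (h • unitCube n) := by
    calc A.toFun n S = A.toFun n (⋃ z ∈ T, S ∩ gridCell h z) := by rw [← hS]
      _ ≤ ∑ z ∈ T, A.toFun n (S ∩ gridCell h z) := A.subadd_finset T _
          (fun _ _ => hb.subset Set.inter_subset_left)
          (fun z _ => hm.inter (measurableSet_gridCell h z))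
      _ ≤ ∑ z ∈ T, A.toFun n (h • unitCube n) := Finset.sum_le_sum fun z _ => hcell z
      _ = _ := by simp
  have hthick : volume (Metric.thickening ((n + 1) * h) S) ≠ ⊤ :=
    hb.thickening.measure_lt_top.ne
  have h2 : (T.card : ℝ) * h ^ n ≤ (volume (Metric.thickening ((n + 1) * h) S)).toReal := by
    have : volume (⋃ z ∈ T, gridCell h z) = T.card * ENNReal.ofReal (h ^ n) := by
      rw [measure_biUnion_finset]
      · simp [volume_gridCell hh]
      · intro z _ w _ hzw
        refine Set.disjoint_left.2 fun x hx hx' => hzw ?_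
        rw [mem_gridCell_iff hh] at hx hx'
        exact hx.symm.trans hx'
      · exact fun z _ => measurableSet_gridCell h z
    have hsub : (⋃ z ∈ T, gridCell h z) ⊆ Metric.thickening ((n + 1) * h) S := by
      intro x hx
      simp only [Set.mem_iUnion, exists_prop] at hx
      obtain ⟨z, hz, hx⟩ := hx
      obtain ⟨y, hy, hyz⟩ := (hmemT z).1 hz
      exact Metric.mem_thickening_iff.2 ⟨y, hy,
        dist_gridCell hh z hx ((mem_gridCell_iff hh _ _).2 hyz)⟩
    have hle := ENNReal.toReal_mono hthick (measure_mono hsub)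
    rw [this, ENNReal.toReal_mul, ENNReal.toReal_ofReal (by positivity)] at hle
    simpa using hle
  have hcomp : IsCompact (h • unitCube n) := (isCompact_unitCube n).smul h
  have ha := A.nonneg n _ hcomp.isBounded hcomp.measurableSet
  calc A.toFun n S ≤ T.card * A.toFun n (h • unitCube n) := h1
    _ = A.toFun n (h • unitCube n) / h ^ n * (T.card * h ^ n) := by
        rw [div_mul_eq_mul_div, eq_div_iff (pow_pos hh n).ne']; ring
    _ ≤ _ := by gcongr

lemma volume_smul_toReal {n : ℕ} {r : ℝ} (hr : 0 < r) (S : Set (EuclideanSpace ℝ (Fin n))) :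
    (volume (r • S)).toReal = r ^ n * (volume S).toReal := by
  rw [Measure.addHaar_smul_of_nonneg volume hr.le, ENNReal.toReal_mul, finrank_euclideanSpace_fin,
    ENNReal.toReal_ofReal (by positivity)]

lemma thickening_smul_subset {n : ℕ} {r : ℝ} (hr : 0 < r) (d : ℝ)
    (S : Set (EuclideanSpace ℝ (Fin n))) :
    Metric.thickening d (r • S) ⊆ r • Metric.thickening (d / r) S := by
  intro x hx
  obtain ⟨y, hy, hxy⟩ := Metric.mem_thickening_iff.1 hx
  obtain ⟨s, hs, rfl⟩ := hy
  refine ⟨r⁻¹ • x, Metric.mem_thickening_iff.2 ⟨s, hs, ?_⟩, by simp [hr.ne']⟩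
  have : dist x (r • s) = r * dist (r⁻¹ • x) s := by
    conv_lhs => rw [← smul_inv_smul₀ hr.ne' x]
    rw [dist_smul₀, Real.norm_of_nonneg hr.le]
  simp only at hxy
  rw [this] at hxy
  rw [lt_div_iff₀ hr]
  linarith

lemma upper_aux (A : PackingBoundFunction) {n : ℕ} {C : Set (EuclideanSpace ℝ (Fin n))}
    (hC : IsCompact C) {h : ℝ} (hh : 0 < h) {c : ℝ}
    (hc : A.toFun n (h • unitCube n) / h ^ n * (volume C).toReal < c) :
    ∀ᶠ r : ℝ in atTop, A.toFun n (r • C) / r ^ n < c := by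
  have hcomp : IsCompact (h • unitCube n) := (isCompact_unitCube n).smul h
  have ha := A.nonneg n _ hcomp.isBounded hcomp.measurableSet
  have t1 : Tendsto (fun r : ℝ => ((n + 1) * h) / r) atTop (nhds 0) :=
    tendsto_const_nhds.div_atTop tendsto_id
  have t2 := (tendsto_measure_cthickening_of_isCompact (μ := volume) hC).comp t1
  have t3 := (ENNReal.tendsto_toReal hC.measure_lt_top.ne).comp t2
  have t4 := t3.const_mul (A.toFun n (h • unitCube n) / h ^ n)
  filter_upwards [t4.eventually_lt_const hc, eventually_gt_atTop 0] with r hr hr0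
  refine lt_of_le_of_lt ?_ hr
  have hrC : IsCompact (r • C) := hC.smul r
  rw [div_le_iff₀ (by positivity)]
  refine (packing_master A hh hrC.isBounded hrC.measurableSet).trans ?_
  rw [mul_assoc]
  refine mul_le_mul_of_nonneg_left ?_ (by positivity)
  simp only [Function.comp]
  rw [mul_comm _ (r ^ n), ← volume_smul_toReal hr0]
  refine ENNReal.toReal_mono ?_ (measure_mono ?_)
  · exact (hC.cthickening.smul r).measure_lt_top.ne
  · exact (thickening_smul_subset hr0 _ _).trans
      (Set.smul_set_mono (Metric.thickening_subset_cthickening _ _))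

lemma cube_limit (A : PackingBoundFunction) (n : ℕ) :
    Tendsto (fun r : ℝ => A.toFun n (r • unitCube n) / r ^ n) atTop (nhds (pbfDensity A n)) ∧
    0 ≤ pbfDensity A n ∧
    ∀ r : ℝ, 0 < r → pbfDensity A n ≤ A.toFun n (r • unitCube n) / r ^ n := by
  set F : ℝ → ℝ := fun r => A.toFun n (r • unitCube n) / r ^ n with hF
  have hF0 : ∀ r, 0 < r → 0 ≤ F r := by
    intro r hr
    have hcomp : IsCompact (r • unitCube n) := (isCompact_unitCube n).smul r
    have ha := A.nonneg n _ hcomp.isBounded hcomp.measurableSet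
    simp only [hF]
    positivity
  set l := sInf (F '' Set.Ioi 0) with hl
  have hbdd : BddBelow (F '' Set.Ioi 0) := ⟨0, by rintro _ ⟨r, hr, rfl⟩; exact hF0 r hr⟩
  have hle : ∀ r, 0 < r → l ≤ F r := fun r hr => csInf_le hbdd ⟨r, hr, rfl⟩
  have hl0 : 0 ≤ l := by
    refine le_csInf ⟨_, 1, by simp, rfl⟩ ?_
    rintro _ ⟨r, hr, rfl⟩; exact hF0 r hr
  have ht : Tendsto F atTop (nhds l) := by
    rw [tendsto_order]
    constructor
    · intro c hc
      filter_upwards [eventually_gt_atTop 0] with r hr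
      exact hc.trans_le (hle r hr)
    · intro c hc
      obtain ⟨_, ⟨h, hh, rfl⟩, hlt⟩ := exists_lt_of_csInf_lt (by exact ⟨_, 1, by simp, rfl⟩) hc
      exact upper_aux A (isCompact_unitCube n) hh (by simpa [volume_unitCube] using hlt)
  have hd : pbfDensity A n = l := by
    have t1 : Tendsto (fun k : ℕ => (2:ℝ) ^ k) atTop atTop :=
      tendsto_pow_atTop_atTop_of_one_lt (by norm_num)
    have t2 := (ht.comp t1).limsup_eq
    rw [← t2, pbfDensity]
    congr 1
    ext k
    simp [hF, pow_mul]
  rw [hd]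
  exact ⟨ht, hl0, hle⟩

lemma upper_bound (A : PackingBoundFunction) {n : ℕ} {C : Set (EuclideanSpace ℝ (Fin n))}
    (hC : IsCompact C) {c : ℝ} (hc : pbfDensity A n * (volume C).toReal < c) :
    ∀ᶠ r : ℝ in atTop, A.toFun n (r • C) / r ^ n < c := by
  have t := (cube_limit A n).1.mul_const (volume C).toReal
  obtain ⟨h, h1, h2⟩ := ((t.eventually_lt_const hc).and (eventually_gt_atTop 0)).exists
  exact upper_aux A hC h2 h1


lemma exists_big_cube (A : PackingBoundFunction) {n : ℕ} {C : Set (EuclideanSpace ℝ (Fin n))}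
    (hC : IsCompact C) : ∃ Q : Set (EuclideanSpace ℝ (Fin n)), IsCompact Q ∧ C ⊆ Q ∧
      ∀ r : ℝ, 0 < r → pbfDensity A n * (volume Q).toReal * r ^ n ≤ A.toFun n (r • Q) := by
  obtain ⟨R, hR0, hR⟩ := hC.isBounded.exists_pos_norm_le
  set w : EuclideanSpace ℝ (Fin n) := WithLp.toLp 2 (fun _ => -R) with hw
  have hs : 0 < 2 * R := by positivity
  have hcomp : IsCompact ((2 * R) • unitCube n) := (isCompact_unitCube n).smul _
  have hQ : IsCompact ((fun x => x + w) '' ((2 * R) • unitCube n)) :=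
    hcomp.image (continuous_id.add continuous_const)
  refine ⟨_, hQ, ?_, ?_⟩
  · intro x hx
    refine ⟨x - w, (mem_smul_unitCube hs _).2 fun i => ?_, by simp⟩
    have := abs_le.1 ((PiLp.norm_apply_le x i).trans (hR x hx))
    simp only [PiLp.sub_apply, hw]
    constructor <;> linarith
  · intro r hr
    have hv : (volume ((fun x => x + w) '' ((2 * R) • unitCube n))).toReal = (2 * R) ^ n := by
      rw [Set.image_add_right, measure_preimage_add_right, volume_smul_toReal hs, volume_unitCube]
      simp
    have h1 := (cube_limit A n).2.2 (r * (2 * R)) (by positivity)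
    rw [le_div_iff₀ (by positivity), mul_pow] at h1
    rw [hv]
    have h2 : A.toFun n ((r * (2 * R)) • unitCube n) ≤
        A.toFun n (r • ((fun x => x + w) '' ((2 * R) • unitCube n))) := by
      have k1 : IsCompact ((r * (2 * R)) • unitCube n) := (isCompact_unitCube n).smul _
      have k2 := hQ.smul r
      refine A.lipschitz n n _ _ k1.isBounded k1.measurableSet k2.isBounded k2.measurableSet
        ⟨fun x => x + r • w, ?_, ?_⟩
      · rintro _ ⟨x, hx, rfl⟩
        refine ⟨(2 * R) • x + w, ⟨(2 * R) • x, ⟨x, hx, rfl⟩, rfl⟩, ?_⟩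
        simp [smul_smul]
      · intro x _ y _
        simp
    linarith

lemma lower_step (A : PackingBoundFunction) {n : ℕ} {C : Set (EuclideanSpace ℝ (Fin n))}
    (hC : IsCompact C) {ε : ℝ} (hε : 0 < ε) : ∃ B : ℝ, ∀ η : ℝ, 0 < η →
    ∀ᶠ r : ℝ in atTop, pbfDensity A n * (volume C).toReal - B * η ≤
      A.toFun n (((1 + ε) * r) • C) / r ^ n := by
  set δ := pbfDensity A n with hδ
  have hδ0 : 0 ≤ δ := (cube_limit A n).2.1
  obtain ⟨Q, hQ, hCQ, hQA⟩ := exists_big_cube A hC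
  set h : ℝ := ε / (1 + ε) / (n + 1) with hh
  have hh0 : 0 < h := by positivity
  set M : ℝ := A.toFun n (h • unitCube n) / h ^ n with hM
  have hM0 : 0 ≤ M := hδ0.trans ((cube_limit A n).2.2 h hh0)
  refine ⟨δ + 1 + M, fun η hη => ?_⟩
  -- choose an open superset of Q
  obtain ⟨W, hQW, hWo, hWv⟩ : ∃ W, Q ⊆ W ∧ IsOpen W ∧
      volume W < volume Q + ENNReal.ofReal η := by
    exact Q.exists_isOpen_lt_of_lt _
      (ENNReal.lt_add_right hQ.measure_lt_top.ne (by simpa using hη))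
  have hWfin : volume W ≠ ⊤ :=
    (hWv.trans (ENNReal.add_lt_top.2 ⟨hQ.measure_lt_top, ENNReal.ofReal_lt_top⟩)).ne
  have hWr : (volume W).toReal ≤ (volume Q).toReal + η := by
    have := ENNReal.toReal_mono
      (ENNReal.add_lt_top.2 ⟨hQ.measure_lt_top, ENNReal.ofReal_lt_top⟩).ne hWv.le
    rwa [ENNReal.toReal_add hQ.measure_lt_top.ne ENNReal.ofReal_ne_top,
      ENNReal.toReal_ofReal hη.le] at this
  have hUo : IsOpen (W \ C) := hWo.sdiff hC.isClosed
  have hUfin : volume (W \ C) ≠ ⊤ := ne_top_of_le_ne_top hWfin (measure_mono Set.sdiff_subset)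
  have hUv : (volume (W \ C)).toReal = (volume W).toReal - (volume C).toReal := by
    rw [measure_sdiff (hCQ.trans hQW) hC.measurableSet.nullMeasurableSet hC.measure_lt_top.ne,
      ENNReal.toReal_sub_of_le (measure_mono (hCQ.trans hQW)) hWfin]
  obtain ⟨K, hKU, hK, hKv⟩ : ∃ K ⊆ W \ C, IsCompact K ∧
      volume (W \ C) < volume K + ENNReal.ofReal η := by
    exact hUo.measurableSet.exists_isCompact_lt_add hUfin (by simpa using hη)
  have hUK : (volume ((W \ C) \ K)).toReal ≤ η := by
    rw [measure_sdiff hKU hK.measurableSet.nullMeasurableSet hK.measure_lt_top.ne]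
    refine ENNReal.toReal_le_of_le_ofReal hη.le ?_
    exact tsub_le_iff_left.2 hKv.le
  obtain ⟨ρ, hρ, hρU⟩ := hK.exists_cthickening_subset_open hUo hKU
  obtain ⟨ρ', hρ', hρW⟩ := hQ.exists_cthickening_subset_open hWo hQW
  set K' := Metric.cthickening ρ K with hK'
  have hK'c : IsCompact K' := hK.cthickening
  have hK'v : (volume K').toReal ≤ (volume Q).toReal + η - (volume C).toReal := by
    have := ENNReal.toReal_mono hUfin (measure_mono hρU)
    linarith
  have t1 : Tendsto (fun r : ℝ => (ε / (1 + ε)) / r) atTop (nhds 0) :=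
    tendsto_const_nhds.div_atTop tendsto_id
  filter_upwards [upper_bound A hK'c (c := δ * (volume K').toReal + η) (by linarith),
    t1.eventually_lt_const hρ, t1.eventually_lt_const hρ', eventually_gt_atTop 0]
    with r hrK hr1 hr2 hr0
  have hCr : IsCompact (((1 + ε) * r) • C) := hC.smul _
  have hTb : IsBounded (Metric.thickening ε (((1 + ε) * r) • C)) := hCr.isBounded.thickening
  have hTm : MeasurableSet (Metric.thickening ε (((1 + ε) * r) • C)) :=
    Metric.isOpen_thickening.measurableSet
  have hmesh := A.mesh ε hε n _ _ hTb hTm hCr.isBounded hCr.measurableSet subset_rfl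
  set P := (1 / (1 + ε)) • Metric.thickening ε (((1 + ε) * r) • C) with hP
  have hPb : IsBounded P := hTb.smul₀ _
  have hPm : MeasurableSet P := hTm.const_smul₀ _
  have hQr : IsCompact (r • Q) := hQ.smul r
  have hKr : IsCompact (r • K') := hK'c.smul r
  set S := (r • Q) \ (P ∪ r • K') with hS
  have hSb : IsBounded S := hQr.isBounded.subset Set.sdiff_subset
  have hSm : MeasurableSet S := hQr.measurableSet.diff (hPm.union hKr.measurableSet)
  have hsub : r • Q ⊆ (P ∪ r • K') ∪ S := by
    intro x hx
    by_cases hx' : x ∈ P ∪ r • K'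
    · exact Or.inl hx'
    · exact Or.inr ⟨hx, hx'⟩
  have e1 := A.mono hsub hQr.measurableSet ((hPb.union hKr.isBounded).union hSb)
    ((hPm.union hKr.measurableSet).union hSm)
  have e2 := A.subadd (hPb.union hKr.isBounded) (hPm.union hKr.measurableSet) hSb hSm
  have e3 := A.subadd hPb hPm hKr.isBounded hKr.measurableSet
  have e4 := packing_master A hh0 hSb hSm
  have hnh : ((n : ℝ) + 1) * h = ε / (1 + ε) := by
    rw [hh]; field_simp
  rw [hnh] at e4
  have hthick : Metric.thickening (ε / (1 + ε)) S ⊆ r • ((W \ C) \ K) := by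
    intro y hy
    obtain ⟨x, ⟨hxQ, hxn⟩, hyx⟩ := Metric.mem_thickening_iff.1 hy
    obtain ⟨q, hq, rfl⟩ := hxQ
    simp only at hyx hxn
    have hyr : y = r • (r⁻¹ • y) := by simp [hr0.ne']
    have hd : dist y (r • q) = r * dist (r⁻¹ • y) q := by
      conv_lhs => rw [hyr]
      rw [dist_smul₀, Real.norm_of_nonneg hr0.le]
    have hd' : dist (r⁻¹ • y) q < ε / (1 + ε) / r := by
      rw [lt_div_iff₀ hr0]; linarith
    refine ⟨r⁻¹ • y, ⟨⟨?_, ?_⟩, ?_⟩, hyr.symm⟩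
    · exact hρW (Metric.mem_cthickening_of_dist_le _ q _ _ hq (hd'.trans hr2).le)
    · intro hyC
      apply hxn
      left
      refine ⟨(1 + ε) • (r • q), Metric.mem_thickening_iff.2
        ⟨((1 + ε) * r) • (r⁻¹ • y), ⟨_, hyC, rfl⟩, ?_⟩, ?_⟩
      · rw [← smul_smul, ← hyr, dist_smul₀, Real.norm_of_nonneg (by positivity), dist_comm]
        rw [lt_div_iff₀ (by positivity)] at hyx
        linarith
      · simp only
        rw [smul_smul, one_div_mul_cancel (by positivity), one_smul]
    · intro hyK
      apply hxn
      right
      refine ⟨q, Metric.mem_cthickening_of_dist_le q _ _ _ hyK ?_, rfl⟩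
      rw [dist_comm]
      exact (hd'.trans hr1).le
  have hUKfin : volume ((W \ C) \ K) ≠ ⊤ := ne_top_of_le_ne_top hUfin (measure_mono Set.sdiff_subset)
  have e5 : (volume (Metric.thickening (ε / (1 + ε)) S)).toReal ≤ r ^ n * η := by
    have : volume (r • ((W \ C) \ K)) ≠ ⊤ := by
      rw [Measure.addHaar_smul]
      exact ENNReal.mul_ne_top ENNReal.ofReal_ne_top hUKfin
    refine (ENNReal.toReal_mono this (measure_mono hthick)).trans ?_
    rw [volume_smul_toReal hr0]
    gcongr
  have e6 := hQA r hr0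
  have hrn : 0 < r ^ n := by positivity
  rw [div_lt_iff₀ hrn] at hrK
  rw [le_div_iff₀ hrn]
  have e7 : A.toFun n S ≤ M * (r ^ n * η) := e4.trans (by gcongr)
  have e8 : δ * (volume K').toReal ≤ δ * ((volume Q).toReal + η - (volume C).toReal) := by gcongr
  have e9 : (δ * (volume K').toReal + η) * r ^ n ≤
      (δ * ((volume Q).toReal + η - (volume C).toReal) + η) * r ^ n := by gcongr
  linarith

lemma lower_bound (A : PackingBoundFunction) {n : ℕ} {C : Set (EuclideanSpace ℝ (Fin n))}
    (hC : IsCompact C) {c : ℝ} (hc : c < pbfDensity A n * (volume C).toReal) :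
    ∀ᶠ r : ℝ in atTop, c < A.toFun n (r • C) / r ^ n := by
  set l := pbfDensity A n * (volume C).toReal with hl
  obtain ⟨ε, hε, hεc⟩ : ∃ ε : ℝ, 0 < ε ∧ c * (1 + ε) ^ n < l := by
    have t : Tendsto (fun ε : ℝ => c * (1 + ε) ^ n) (nhdsWithin 0 (Set.Ioi 0)) (nhds c) := by
      have : Continuous fun ε : ℝ => c * (1 + ε) ^ n := by fun_prop
      have := (this.tendsto 0).mono_left (nhdsWithin_le_nhds (s := Set.Ioi 0))
      simpa using this
    obtain ⟨ε, h1, h2⟩ := ((t.eventually_lt_const hc).and self_mem_nhdsWithin).exists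
    exact ⟨ε, h2, h1⟩
  obtain ⟨B, hB⟩ := lower_step A hC hε
  set η := (l - c * (1 + ε) ^ n) / (2 * (|B| + 1)) with hη
  have hη0 : 0 < η := div_pos (by linarith) (by positivity)
  have hBη : B * η < l - c * (1 + ε) ^ n := by
    have h1 : η * (2 * (|B| + 1)) = l - c * (1 + ε) ^ n := by
      rw [hη]; field_simp
    have h2 : B * η ≤ |B| * η := by gcongr; exact le_abs_self B
    nlinarith [mul_nonneg (abs_nonneg B) hη0.le]
  have h1ε : 0 < 1 + ε := by positivity
  have t : Tendsto (fun r : ℝ => r / (1 + ε)) atTop atTop := tendsto_id.atTop_div_const h1ε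
  filter_upwards [t.eventually (hB η hη0), eventually_gt_atTop 0] with r hr hr0
  rw [mul_div_cancel₀ _ h1ε.ne', div_pow, div_div_eq_mul_div] at hr
  have h3 : c * (1 + ε) ^ n < A.toFun n (r • C) * (1 + ε) ^ n / r ^ n := by linarith
  rw [mul_div_right_comm] at h3
  exact lt_of_mul_lt_mul_right h3 (by positivity)

/-- For a packing bound function `A` and a compact `C ⊆ ℝ^n`, the limit
of `A(rC)/r^n` as `r → ∞` exists and equals `δ_{A,n} · L_n(C)`. -/
theorem packingBoundFunction_compact_limit (A : PackingBoundFunction) (n : ℕ)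
    (C : Set (EuclideanSpace ℝ (Fin n))) (hC : IsCompact C) :
    Filter.Tendsto (fun r : ℝ => A.toFun n (r • C) / r ^ n) Filter.atTop
      (nhds (pbfDensity A n * (volume C).toReal)) := by
  rw [tendsto_order]
  exact ⟨fun c hc => lower_bound A hC hc, fun c hc => upper_bound A hC hc⟩
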